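/- arXiv:1501.06711 — 2 statements merged into one kernel-verified Lean document; each statement's English description precedes it below -/
import Mathlib

section
/- Let ‖·‖ be a decomposable norm on ℝ^n all of whose unit-ball extreme points have unit ‖·‖_u-norm. Suppose x ∈ ℝ^n, y ∈ T_x^⊥ \ {0}, and z ∈ ℝ^n satisfies ‖z‖ ≤ 1 and ⟨y, z⟩ = ‖y‖*. Then z ∈ T_x^⊥. -/
/-!
The set of maximizers of `⟪y, ·⟫` over the unit ball of `N` is a compact convex face, so by
Krein-Milman it is contained in the closed subspace `(T x)ᗮ` as soon as its extreme points are.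
These are extreme points `a` of the ball itself (`mem_of_extPts`), and for such an `a`:

* `‖a‖ᵤ = 1` for all extreme points gives `⟪a, ·⟫ ≤ N` (Cauchy-Schwarz and Krein-Milman), hence
  `a ∈ ∂N(a)`, and decomposability at `a` forces `e a = a` (`e_eq_self`).
* Normalize `‖y‖* = 1`. Both `e x + y` and `e x - y` lie in `∂N(x)`, so the dual unit ball contains
  `y + e x` and `y - e x`. Evaluating both at `a`, where `⟪y, a⟫ = 1 = N a`, gives `⟪e x, a⟫ = 0`,
  so `y + e x` and `y` are both in `∂N(a) = a + {v ∈ (T a)ᗮ, ‖v‖* ≤ 1}`.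
  Therefore `e x ∈ (T a)ᗮ`, and since `‖e x‖* ≤ 1`,
  decomposability at `a` yields `‖a ± e x‖* ≤ 1`.
* As `⟪e x, x⟫ = N x`, the bounds `|⟪a ± e x, x⟫| ≤ N x` give `⟪a, x⟫ = 0`, so `e x + a ∈ ∂N(x)`, and
  decomposability at `x` gives `a ∈ (T x)ᗮ` (`extreme_mem_perp`).
-/

open Matrix

namespace PGH

variable {n m : ℕ}

/-- The inner product `⟪x, y⟫ = xᵀ B y` on `ℝⁿ` induced by a matrix `B`. -/
def ip (B : Matrix (Fin n) (Fin n) ℝ) (x y : Fin n → ℝ) : ℝ :=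
  dotProduct x (B.mulVec y)

/-- The norm `‖x‖ᵤ = √(xᵀ B x)` induced by the inner product. -/
noncomputable def normu (B : Matrix (Fin n) (Fin n) ℝ) (x : Fin n → ℝ) : ℝ :=
  Real.sqrt (ip B x x)

/-- `N` is a norm on `ℝⁿ`. -/
structure IsNorm (N : (Fin n → ℝ) → ℝ) : Prop where
  nonneg : ∀ x, 0 ≤ N x
  eq_zero_iff : ∀ x, N x = 0 ↔ x = 0
  triangle : ∀ x y, N (x + y) ≤ N x + N y
  smul_eq : ∀ (c : ℝ) (x), N (c • x) = |c| * N x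

/-- The dual norm `‖y‖* = sup {⟪y, x⟫ : N x ≤ 1}`. -/
noncomputable def dualNorm (B : Matrix (Fin n) (Fin n) ℝ) (N : (Fin n → ℝ) → ℝ)
    (y : Fin n → ℝ) : ℝ :=
  sSup ((fun x => ip B y x) '' {x | N x ≤ 1})

/-- The subdifferential of `N` at `x` with respect to `⟪·,·⟫`. -/
def subdiff (B : Matrix (Fin n) (Fin n) ℝ) (N : (Fin n → ℝ) → ℝ) (x : Fin n → ℝ) :
    Set (Fin n → ℝ) :=
  {z | ∀ y, N x + ip B z (y - x) ≤ N y}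

/-- The set `G` of extreme points of the unit ball of `N`. -/
def extPts (N : (Fin n → ℝ) → ℝ) : Set (Fin n → ℝ) :=
  Set.extremePoints ℝ {x | N x ≤ 1}

/-- The orthogonal complement (w.r.t. `⟪·,·⟫`) of a subspace `T`, as a set. -/
def perp (B : Matrix (Fin n) (Fin n) ℝ) (T : Submodule ℝ (Fin n → ℝ)) :
    Set (Fin n → ℝ) :=
  {v | ∀ u ∈ T, ip B u v = 0}

/-- A decomposability structure for the norm `N`: for every `x` there are a subspace `T x`
and a vector `e x ∈ T x` with `∂N(x) = {e x + v : v ∈ (T x)ᗮ, ‖v‖* ≤ 1}`. -/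
structure DecompStruct (B : Matrix (Fin n) (Fin n) ℝ) (N : (Fin n → ℝ) → ℝ) where
  T : (Fin n → ℝ) → Submodule ℝ (Fin n → ℝ)
  e : (Fin n → ℝ) → (Fin n → ℝ)
  e_mem : ∀ x, e x ∈ T x
  subdiff_eq : ∀ x, subdiff B N x =
    {ξ | ∃ v ∈ perp B (T x), dualNorm B N v ≤ 1 ∧ ξ = e x + v}

/-- `K x = ‖e x‖ᵤ²`. -/
noncomputable def Kfun (B : Matrix (Fin n) (Fin n) ℝ) (N : (Fin n → ℝ) → ℝ)
    (D : DecompStruct B N) (x : Fin n → ℝ) : ℝ :=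
  (normu B (D.e x)) ^ 2

/-- Squared Euclidean norm `‖v‖₂²` on `ℝᵐ`. -/
def sq2 (v : Fin m → ℝ) : ℝ := dotProduct v v

/-- The least-squares loss `f(x) = ½ ‖A x - b‖₂²`. -/
noncomputable def fls (A : Matrix (Fin m) (Fin n) ℝ) (b : Fin m → ℝ) (x : Fin n → ℝ) : ℝ :=
  (1 / 2) * sq2 (A.mulVec x - b)

/-- The adjoint `A* = B⁻¹ Aᵀ` of `A` w.r.t. `⟪·,·⟫`. -/
noncomputable def Astar (B : Matrix (Fin n) (Fin n) ℝ) (A : Matrix (Fin m) (Fin n) ℝ) :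
    Matrix (Fin n) (Fin m) ℝ := B⁻¹ * Aᵀ

/-- The gradient `∇f(x) = A*(A x - b)` of the least-squares loss w.r.t. `⟪·,·⟫`. -/
noncomputable def gradf (B : Matrix (Fin n) (Fin n) ℝ) (A : Matrix (Fin m) (Fin n) ℝ)
    (b : Fin m → ℝ) (x : Fin n → ℝ) : Fin n → ℝ :=
  (Astar B A).mulVec (A.mulVec x - b)

/-- `ρ` is a valid lower restricted isometry constant of `A` at level `k`. -/
def IsLowerRIP (B : Matrix (Fin n) (Fin n) ℝ) (N : (Fin n → ℝ) → ℝ)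
    (A : Matrix (Fin m) (Fin n) ℝ) (k ρ : ℝ) : Prop :=
  0 < ρ ∧ ∀ x : Fin n → ℝ, (N x) ^ 2 ≤ k * (normu B x) ^ 2 →
    ρ * (normu B x) ^ 2 ≤ sq2 (A.mulVec x)

/-- `ρ` is a valid upper restricted isometry constant of `A` at level `k`. -/
def IsUpperRIP (B : Matrix (Fin n) (Fin n) ℝ) (N : (Fin n → ℝ) → ℝ)
    (A : Matrix (Fin m) (Fin n) ℝ) (k ρ : ℝ) : Prop :=
  0 < ρ ∧ ∀ x : Fin n → ℝ, (N x) ^ 2 ≤ k * (normu B x) ^ 2 →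
    sq2 (A.mulVec x) ≤ ρ * (normu B x) ^ 2

/-- The regularized objective `φ_λ(x) = f(x) + λ N(x)`. -/
noncomputable def phi (A : Matrix (Fin m) (Fin n) ℝ) (b : Fin m → ℝ)
    (N : (Fin n → ℝ) → ℝ) (lam : ℝ) (x : Fin n → ℝ) : ℝ :=
  fls A b x + lam * N x

/-- The proximal model `m_{λ,L}(y, x)`. -/
noncomputable def mdl (B : Matrix (Fin n) (Fin n) ℝ) (A : Matrix (Fin m) (Fin n) ℝ)
    (b : Fin m → ℝ) (N : (Fin n → ℝ) → ℝ) (lam L : ℝ) (y x : Fin n → ℝ) : ℝ :=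
  fls A b y + ip B (gradf B A b y) (x - y) + (L / 2) * (normu B (x - y)) ^ 2 + lam * N x

/-- `xp = Prox_{λ,L}(y)`, i.e. `xp` minimizes `m_{λ,L}(y, ·)`. -/
def IsProx (B : Matrix (Fin n) (Fin n) ℝ) (A : Matrix (Fin m) (Fin n) ℝ)
    (b : Fin m → ℝ) (N : (Fin n → ℝ) → ℝ) (lam L : ℝ) (y xp : Fin n → ℝ) : Prop :=
  ∀ u, mdl B A b N lam L y xp ≤ mdl B A b N lam L y u

/-- `ω_λ(x) = min_{ξ ∈ ∂N(x)} ‖λ ξ + ∇f(x)‖*`. -/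
noncomputable def omega (B : Matrix (Fin n) (Fin n) ℝ) (A : Matrix (Fin m) (Fin n) ℝ)
    (b : Fin m → ℝ) (N : (Fin n → ℝ) → ℝ) (lam : ℝ) (x : Fin n → ℝ) : ℝ :=
  sInf ((fun ξ => dualNorm B N (lam • ξ + gradf B A b x)) '' subdiff B N x)

/-- Assumption 1 of the paper, phrased for given valid restricted isometry constants
`ρlow = ρ₋(A, c k₀ (1+γ)²)`, `ρlow2 = ρ₋(A, 72 r c k₀ (1+γ) γinc)` and
`ρup2 = ρ₊(A, 72 r c k₀ (1+γ) γinc)`. -/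
def Assumption1 (B : Matrix (Fin n) (Fin n) ℝ) (N : (Fin n → ℝ) → ℝ)
    (A : Matrix (Fin m) (Fin n) ℝ) (z : Fin m → ℝ)
    (c k₀ γinc lamtgt r δ γ ρlow ρlow2 ρup2 : ℝ) : Prop :=
  dualNorm B N ((Astar B A).mulVec z) ≤ lamtgt / 4 ∧
  1 < r ∧ 0 < δ ∧ δ ≤ 1 / 4 ∧
  γ = (lamtgt * (1 + δ) + dualNorm B N ((Astar B A).mulVec z)) /
      (lamtgt * (1 - δ) - dualNorm B N ((Astar B A).mulVec z)) ∧
  IsLowerRIP B N A (c * k₀ * (1 + γ) ^ 2) ρlow ∧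
  IsLowerRIP B N A (72 * r * c * k₀ * (1 + γ) * γinc) ρlow2 ∧
  IsUpperRIP B N A (72 * r * c * k₀ * (1 + γ) * γinc) ρup2 ∧
  ρlow / ρup2 > c / r

/-- One backtracking step: `M` is the smallest element of `{Lt γinc^j : j ≥ 0}`
for which the proximal point is accepted, and `xt1` is that proximal point. -/
def BacktrackMin (B : Matrix (Fin n) (Fin n) ℝ) (A : Matrix (Fin m) (Fin n) ℝ)
    (b : Fin m → ℝ) (N : (Fin n → ℝ) → ℝ) (lam γinc Lt : ℝ)
    (xt : Fin n → ℝ) (M : ℝ) (xt1 : Fin n → ℝ) : Prop :=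
  (∃ j : ℕ, M = Lt * γinc ^ j) ∧
  IsProx B A b N lam M xt xt1 ∧
  phi A b N lam xt1 ≤ mdl B A b N lam M xt xt1 ∧
  ∀ j : ℕ, Lt * γinc ^ j < M →
    ∀ u, IsProx B A b N lam (Lt * γinc ^ j) xt u →
      ¬ phi A b N lam u ≤ mdl B A b N lam (Lt * γinc ^ j) xt u

/-- The iterates of the proximal-gradient subroutine with backtracking. -/
structure ProxGradSeq (B : Matrix (Fin n) (Fin n) ℝ) (A : Matrix (Fin m) (Fin n) ℝ)
    (b : Fin m → ℝ) (N : (Fin n → ℝ) → ℝ) (lam γinc γdec Lmin : ℝ)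
    (x : ℕ → Fin n → ℝ) (L M : ℕ → ℝ) : Prop where
  step : ∀ t, BacktrackMin B A b N lam γinc (L t) (x t) (M (t + 1)) (x (t + 1))
  Lupdate : ∀ t, L (t + 1) = max Lmin (M (t + 1) / γdec)

/-- The quantity `‖M (x⁻ - x) + ∇f(x) - ∇f(x⁻)‖*` used in the stopping criterion. -/
noncomputable def stopQ (B : Matrix (Fin n) (Fin n) ℝ) (A : Matrix (Fin m) (Fin n) ℝ)
    (b : Fin m → ℝ) (N : (Fin n → ℝ) → ℝ) (Mt : ℝ) (xprev xcur : Fin n → ℝ) : ℝ :=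
  dualNorm B N (Mt • (xprev - xcur) + (gradf B A b xcur - gradf B A b xprev))


section InnerProduct

variable (B : Matrix (Fin n) (Fin n) ℝ)

lemma ip_add_left (x y z : Fin n → ℝ) : ip B (x + y) z = ip B x z + ip B y z := by
  simp [ip, add_dotProduct]

lemma ip_add_right (x y z : Fin n → ℝ) : ip B x (y + z) = ip B x y + ip B x z := by
  simp [ip, mulVec_add, dotProduct_add]

lemma ip_smul_left (c : ℝ) (x y : Fin n → ℝ) : ip B (c • x) y = c * ip B x y := by
  simp [ip, smul_dotProduct]

lemma ip_smul_right (c : ℝ) (x y : Fin n → ℝ) : ip B x (c • y) = c * ip B x y := by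
  simp [ip, mulVec_smul, dotProduct_smul]

lemma ip_neg_left (x y : Fin n → ℝ) : ip B (-x) y = -ip B x y := by
  simp [ip]

lemma ip_neg_right (x y : Fin n → ℝ) : ip B x (-y) = -ip B x y := by
  simp [ip, mulVec_neg]

lemma ip_sub_left (x y z : Fin n → ℝ) : ip B (x - y) z = ip B x z - ip B y z := by
  rw [sub_eq_add_neg, ip_add_left, ip_neg_left, sub_eq_add_neg]

lemma ip_sub_right (x y z : Fin n → ℝ) : ip B x (y - z) = ip B x y - ip B x z := by
  rw [sub_eq_add_neg, ip_add_right, ip_neg_right, sub_eq_add_neg]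

lemma continuous_ip (x : Fin n → ℝ) : Continuous (fun y => ip B x y) := by
  unfold ip; fun_prop

variable {B}

lemma ip_comm (hB : B.PosDef) (x y : Fin n → ℝ) : ip B x y = ip B y x := by
  have h : Bᵀ = B := (conjTranspose_eq_transpose_of_trivial B).symm.trans hB.isHermitian
  unfold ip
  rw [dotProduct_mulVec, ← mulVec_transpose, h, dotProduct_comm]

lemma ip_pos (hB : B.PosDef) {x : Fin n → ℝ} (hx : x ≠ 0) : 0 < ip B x x := by
  simpa [ip] using hB.dotProduct_mulVec_pos hx

lemma ip_nonneg (hB : B.PosDef) (x : Fin n → ℝ) : 0 ≤ ip B x x := by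
  simpa [ip] using hB.posSemidef.dotProduct_mulVec_nonneg x

end InnerProduct

section Perp

variable {B : Matrix (Fin n) (Fin n) ℝ} {T : Submodule ℝ (Fin n → ℝ)} {v w : Fin n → ℝ}

lemma perp_add (hv : v ∈ perp B T) (hw : w ∈ perp B T) : v + w ∈ perp B T := fun u hu => by
  rw [ip_add_right, hv u hu, hw u hu, add_zero]

lemma perp_smul (c : ℝ) (hv : v ∈ perp B T) : c • v ∈ perp B T := fun u hu => by
  rw [ip_smul_right, hv u hu, mul_zero]

lemma perp_neg (hv : v ∈ perp B T) : -v ∈ perp B T := by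
  simpa using perp_smul (-1) hv

lemma perp_sub (hv : v ∈ perp B T) (hw : w ∈ perp B T) : v - w ∈ perp B T := by
  simpa [sub_eq_add_neg] using perp_add hv (perp_neg hw)

lemma convex_perp : Convex ℝ (perp B T) := fun _ hv _ hw a b _ _ _ =>
  perp_add (perp_smul a hv) (perp_smul b hw)

lemma isClosed_perp : IsClosed (perp B T) := by
  have h : perp B T = ⋂ u ∈ T, {v | ip B u v = 0} := by
    ext v; simp [perp]
  rw [h]
  exact isClosed_biInter fun u _ => isClosed_eq (continuous_ip B u) continuous_const

end Perp

section Ball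

variable {N : (Fin n → ℝ) → ℝ}

lemma IsNorm.neg (hN : IsNorm N) (x : Fin n → ℝ) : N (-x) = N x := by
  simpa using hN.smul_eq (-1) x

lemma IsNorm.convexOn (hN : IsNorm N) : ConvexOn ℝ Set.univ N := by
  refine ⟨convex_univ, fun x _ y _ a b ha hb _ => ?_⟩
  refine (hN.triangle _ _).trans ?_
  rw [hN.smul_eq, hN.smul_eq, abs_of_nonneg ha, abs_of_nonneg hb, smul_eq_mul, smul_eq_mul]

lemma IsNorm.continuous (hN : IsNorm N) : Continuous N := by
  simpa [continuousOn_univ] using hN.convexOn.continuousOn isOpen_univ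

lemma IsNorm.convex_ball (hN : IsNorm N) : Convex ℝ {x | N x ≤ 1} := by
  simpa using hN.convexOn.convex_le 1

/-- The unit ball of `N` is bounded because `N` has a positive minimum on the unit sphere of the
sup norm. -/
lemma IsNorm.isCompact_ball (hN : IsNorm N) : IsCompact {x | N x ≤ 1} := by
  refine Metric.isCompact_of_isClosed_isBounded
    (isClosed_le hN.continuous continuous_const) ?_
  obtain hS | hS := (Metric.sphere (0 : Fin n → ℝ) 1).eq_empty_or_nonempty
  · refine Bornology.IsBounded.subset (Bornology.isBounded_singleton (x := 0)) fun x _ => ?_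
    by_contra hx
    have hx' : ‖x‖ ≠ 0 := norm_ne_zero_iff.2 hx
    have : ‖x‖⁻¹ • x ∈ Metric.sphere (0 : Fin n → ℝ) 1 := by
      simp [norm_smul, hx']
    rw [hS] at this
    exact this
  · obtain ⟨p, hp, hmin⟩ := (isCompact_sphere (0 : Fin n → ℝ) 1).exists_isMinOn hS
      hN.continuous.continuousOn
    have hp0 : p ≠ 0 := by
      rintro rfl
      simp at hp
    have hm : 0 < N p := (hN.nonneg p).lt_of_ne fun h => hp0 ((hN.eq_zero_iff p).1 h.symm)
    refine (Metric.isBounded_closedBall (x := (0 : Fin n → ℝ)) (r := (N p)⁻¹)).subset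
      fun x hx => ?_
    rw [mem_closedBall_zero_iff]
    by_cases hx0 : x = 0
    · simpa [hx0] using hm.le
    have hx' : 0 < ‖x‖ := norm_pos_iff.2 hx0
    have hs : ‖x‖⁻¹ • x ∈ Metric.sphere (0 : Fin n → ℝ) 1 := by
      simp [norm_smul, hx'.ne']
    have h1 : N p ≤ ‖x‖⁻¹ * N x := by
      have := isMinOn_iff.1 hmin _ hs
      rwa [hN.smul_eq, abs_of_pos (inv_pos.2 hx')] at this
    have h2 : N p ≤ ‖x‖⁻¹ :=
      h1.trans (mul_le_of_le_one_right (inv_pos.2 hx').le hx)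
    exact (le_inv_comm₀ hm hx').1 h2

/-- A closed convex set containing all extreme points of the unit ball of `N` at which the
functional `⟪y, ·⟫` attains its maximum `d` contains every maximizer. -/
lemma mem_of_extPts (hN : IsNorm N) (B : Matrix (Fin n) (Fin n) ℝ) {y : Fin n → ℝ} {d : ℝ}
    (hd : ∀ w, N w ≤ 1 → ip B y w ≤ d) {S : Set (Fin n → ℝ)} (hS : Convex ℝ S)
    (hSc : IsClosed S) (h : ∀ a ∈ extPts N, ip B y a = d → a ∈ S)
    {z : Fin n → ℝ} (hz : N z ≤ 1) (hyz : ip B y z = d) : z ∈ S := by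
  set F : Set (Fin n → ℝ) := {w | N w ≤ 1} ∩ {w | ip B y w = d} with hF
  have hFc : IsCompact F :=
    hN.isCompact_ball.inter_right (isClosed_eq (continuous_ip B y) continuous_const)
  have hFconv : Convex ℝ F := by
    refine hN.convex_ball.inter fun u hu v hv a b _ _ hab => ?_
    simp only [Set.mem_ofPred_eq] at hu hv ⊢
    rw [ip_add_right, ip_smul_right, ip_smul_right, hu, hv, ← add_mul, hab, one_mul]
  have hFe : IsExtreme ℝ {w | N w ≤ 1} F := by
    refine ⟨Set.inter_subset_left, ?_⟩
    rintro u hu v hv w ⟨-, hw⟩ ⟨a, b, ha, hb, hab, rfl⟩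
    refine ⟨hu, le_antisymm (hd u hu) ?_⟩
    simp only [Set.mem_ofPred_eq] at hw
    rw [ip_add_right, ip_smul_right, ip_smul_right] at hw
    have hv' := mul_le_mul_of_nonneg_left (hd v hv) hb.le
    have : a * d ≤ a * ip B y u := by
      have : (a + b) * d = d := by rw [hab, one_mul]
      linarith
    exact le_of_mul_le_mul_left this ha
  have hzF : z ∈ closure (convexHull ℝ (F.extremePoints ℝ)) := by
    rw [closure_convexHull_extremePoints hFc hFconv]
    exact ⟨hz, hyz⟩
  refine closure_minimal (convexHull_min (fun a ha => ?_) hS) hSc hzF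
  exact h a (hFe.extremePoints_subset_extremePoints ha) ha.1.2

end Ball

section Dual

variable {B : Matrix (Fin n) (Fin n) ℝ} {N : (Fin n → ℝ) → ℝ}

/-- The supremum defining `‖v‖*` is over a bounded set, as the unit ball of `N` is compact. -/
lemma ip_le_dualNorm (hN : IsNorm N) (v : Fin n → ℝ) {w : Fin n → ℝ} (hw : N w ≤ 1) :
    ip B v w ≤ dualNorm B N v :=
  le_csSup (hN.isCompact_ball.bddAbove_image (continuous_ip B v).continuousOn) ⟨w, hw, rfl⟩

lemma ip_le_dualNorm_mul (hN : IsNorm N) (v w : Fin n → ℝ) :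
    ip B v w ≤ dualNorm B N v * N w := by
  by_cases hw : w = 0
  · subst hw
    rw [(hN.eq_zero_iff 0).2 rfl]
    simp [ip]
  have hpos : 0 < N w := (hN.nonneg w).lt_of_ne fun h => hw ((hN.eq_zero_iff w).1 h.symm)
  have h1 : N ((N w)⁻¹ • w) ≤ 1 := by
    rw [hN.smul_eq, abs_of_pos (inv_pos.2 hpos), inv_mul_cancel₀ hpos.ne']
  have := ip_le_dualNorm (B := B) hN v h1
  rw [ip_smul_right, inv_mul_le_iff₀ hpos] at this
  linarith

lemma dualNorm_le_one_iff (hN : IsNorm N) (v : Fin n → ℝ) :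
    dualNorm B N v ≤ 1 ↔ ∀ w, ip B v w ≤ N w := by
  constructor
  · intro h w
    exact (ip_le_dualNorm_mul hN v w).trans (mul_le_of_le_one_left (hN.nonneg w) h)
  · intro h
    refine csSup_le ⟨_, 0, ?_, rfl⟩ ?_
    · simp [(hN.eq_zero_iff 0).2 rfl]
    · rintro _ ⟨w, hw, rfl⟩
      exact (h w).trans hw

lemma dualNorm_pos (hB : B.PosDef) (hN : IsNorm N) {y : Fin n → ℝ} (hy : y ≠ 0) :
    0 < dualNorm B N y :=
  pos_of_mul_pos_left ((ip_pos hB hy).trans_le (ip_le_dualNorm_mul hN y y)) (hN.nonneg y)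

/-- Subgradients of a norm at `x` are the vectors of the dual unit ball attaining `N x` at `x`. -/
lemma mem_subdiff_iff (hN : IsNorm N) (ξ x : Fin n → ℝ) :
    ξ ∈ subdiff B N x ↔ ip B ξ x = N x ∧ ∀ w, ip B ξ w ≤ N w := by
  constructor
  · intro h
    have hle : ∀ w, ip B ξ w ≤ N w := by
      intro w
      have h1 := h (x + w)
      rw [add_sub_cancel_left] at h1
      linarith [hN.triangle x w]
    refine ⟨le_antisymm (hle x) ?_, hle⟩
    have h0 := h 0
    rw [(hN.eq_zero_iff 0).2 rfl, zero_sub, ip_neg_right] at h0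
    linarith
  · rintro ⟨h1, h2⟩ w
    rw [ip_sub_right, h1]
    linarith [h2 w]

lemma add_mem_subdiff (hN : IsNorm N) (D : DecompStruct B N) {x v : Fin n → ℝ}
    (hv : v ∈ perp B (D.T x)) (hv1 : ∀ w, ip B v w ≤ N w) : D.e x + v ∈ subdiff B N x := by
  rw [D.subdiff_eq]
  exact ⟨v, hv, (dualNorm_le_one_iff hN v).2 hv1, rfl⟩

lemma sub_e_mem_perp (D : DecompStruct B N) {x ξ : Fin n → ℝ} (h : ξ ∈ subdiff B N x) :
    ξ - D.e x ∈ perp B (D.T x) := by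
  rw [D.subdiff_eq] at h
  obtain ⟨v, hv, -, rfl⟩ := h
  simpa using hv

lemma e_mem_subdiff (hN : IsNorm N) (D : DecompStruct B N) (x : Fin n → ℝ) :
    D.e x ∈ subdiff B N x := by
  have h0 : (0 : Fin n → ℝ) ∈ perp B (D.T x) := fun u _ => by simp [ip]
  simpa using add_mem_subdiff hN D h0 (fun w => by simpa [ip] using hN.nonneg w)

/-- Extreme points of the unit ball have dual norm at most one: by Cauchy-Schwarz `⟪a, b⟫ ≤ 1` for
every extreme point `b`, and Krein-Milman extends this bound to the whole ball. -/
lemma ip_extPts_le (hB : B.PosDef) (hN : IsNorm N) (hExt : ∀ a ∈ extPts N, ip B a a = 1)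
    {a : Fin n → ℝ} (ha : a ∈ extPts N) (w : Fin n → ℝ) : ip B a w ≤ N w := by
  refine (dualNorm_le_one_iff hN a).1 ?_ w
  refine csSup_le ⟨_, 0, ?_, rfl⟩ ?_
  · simp [(hN.eq_zero_iff 0).2 rfl]
  rintro _ ⟨w, hw, rfl⟩
  have hc : Convex ℝ {w | ip B a w ≤ 1} := by
    intro u hu v hv s t hs ht hst
    simp only [Set.mem_ofPred_eq] at hu hv ⊢
    rw [ip_add_right, ip_smul_right, ip_smul_right]
    nlinarith
  -- Maximizers of the zero functional are all points of the ball.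
  refine mem_of_extPts hN B (y := 0) (d := 0) (fun w _ => by simp [ip]) hc
    (isClosed_le (continuous_ip B a) continuous_const) (fun b hb _ => ?_) hw (by simp [ip])
  have h := ip_nonneg hB (a - b)
  rw [ip_sub_left, ip_sub_right, ip_sub_right, hExt a ha, hExt b hb, ip_comm hB b a] at h
  simp only [Set.mem_ofPred_eq]
  linarith

/-- A vector of unit `‖·‖ᵤ`-norm that is a subgradient of `N` at itself, with `N a = 1`, has no
component in `(T a)ᗮ`: `⟪e a, a⟫ = N a = 1` forces `‖e a‖ᵤ = 1 = ‖a‖ᵤ`. -/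
lemma e_eq_self (hB : B.PosDef) (hN : IsNorm N) (D : DecompStruct B N) {a : Fin n → ℝ}
    (haa : ip B a a = 1) (ha1 : N a = 1) (ha : ∀ w, ip B a w ≤ N w) : D.e a = a := by
  have hv := sub_e_mem_perp D ((mem_subdiff_iff hN a a).2 ⟨haa.trans ha1.symm, ha⟩)
  have he := ((mem_subdiff_iff hN _ _).1 (e_mem_subdiff hN D a)).1
  have h1 := hv _ (D.e_mem a)
  rw [ip_sub_right, he, ha1] at h1
  by_contra hne
  have h2 := ip_pos hB (sub_ne_zero.2 (Ne.symm hne))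
  rw [ip_sub_left, ip_sub_right, ip_sub_right, haa, ip_comm hB a, he, ha1] at h2
  linarith

/-- The case of the theorem where `z` is an extreme point `a` of the unit ball and `y` is scaled to
have dual norm one. -/
lemma extreme_mem_perp (hB : B.PosDef) (hN : IsNorm N)
    (hExt : ∀ a ∈ extPts N, ip B a a = 1) (D : DecompStruct B N) {x y a : Fin n → ℝ}
    (hy : y ∈ perp B (D.T x)) (hy1 : ∀ w, ip B y w ≤ N w) (ha : a ∈ extPts N)
    (hya : ip B y a = 1) : a ∈ perp B (D.T x) := by
  have hadual := ip_extPts_le hB hN hExt ha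
  have hNa : N a = 1 := le_antisymm ha.1 (hya ▸ hy1 a)
  have hea : D.e a = a := e_eq_self hB hN D (hExt a ha) hNa hadual
  obtain ⟨hex, he1⟩ := (mem_subdiff_iff hN _ _).1 (e_mem_subdiff hN D x)
  have hy1n : ∀ w, ip B (-y) w ≤ N w := fun w => by
    have := hy1 (-w)
    rwa [ip_neg_right, hN.neg, ← ip_neg_left] at this
  have hp := ((mem_subdiff_iff hN _ _).1 (add_mem_subdiff hN D hy hy1)).2
  have hm := ((mem_subdiff_iff hN _ _).1 (add_mem_subdiff hN D (perp_neg hy) hy1n)).2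
  have hm' : ∀ w, ip B (y - D.e x) w ≤ N w := fun w => by
    have := hm (-w)
    rw [ip_neg_right, hN.neg, ip_add_left, ip_neg_left] at this
    rw [ip_sub_left]
    linarith
  have hea0 : ip B (D.e x) a = 0 := by
    have h1 := hp a
    have h2 := hm' a
    rw [ip_add_left] at h1
    rw [ip_sub_left] at h2
    linarith
  have hs1 : D.e x + y ∈ subdiff B N a :=
    (mem_subdiff_iff hN _ _).2 ⟨by rw [ip_add_left, hea0, hya, hNa, zero_add], hp⟩
  have hs0 : y ∈ subdiff B N a := (mem_subdiff_iff hN _ _).2 ⟨hya.trans hNa.symm, hy1⟩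
  -- The subgradients `y` and `y + e x` at `a` differ by `e x`.
  have heT : D.e x ∈ perp B (D.T a) := by
    have := perp_sub (sub_e_mem_perp D hs1) (sub_e_mem_perp D hs0)
    have h : D.e x + y - D.e a - (y - D.e a) = D.e x := by abel
    rwa [h] at this
  have he1n : ∀ w, ip B (-D.e x) w ≤ N w := fun w => by
    have := he1 (-w)
    rwa [ip_neg_right, hN.neg, ← ip_neg_left] at this
  have hap := ((mem_subdiff_iff hN _ _).1 (add_mem_subdiff hN D heT he1)).2
  have ham := ((mem_subdiff_iff hN _ _).1 (add_mem_subdiff hN D (perp_neg heT) he1n)).2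
  rw [hea] at hap ham
  have hax : ip B a x = 0 := by
    have h1 := hap x
    have h2 := ham (-x)
    rw [ip_add_left] at h1
    rw [ip_neg_right, hN.neg, ip_add_left, ip_neg_left] at h2
    linarith
  have hfin : a + D.e x ∈ subdiff B N x :=
    (mem_subdiff_iff hN _ _).2 ⟨by rw [ip_add_left, hax, hex, zero_add], hap⟩
  simpa using sub_e_mem_perp D hfin

end Dual

/-- **Lemma 6 / `interm2`.** Let `x ∈ ℝⁿ`, `y ∈ T_x^⊥ \ {0}`, and let `z`
with `‖z‖ ≤ 1` satisfy `⟪y, z⟫ = ‖y‖*`. Then `z ∈ T_x^⊥`. -/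
theorem interm_general {n : ℕ}
    (B : Matrix (Fin n) (Fin n) ℝ) (hB : B.PosDef)
    (N : (Fin n → ℝ) → ℝ) (hN : IsNorm N)
    (hExt : ∀ a ∈ extPts N, normu B a = 1)
    (D : DecompStruct B N)
    (x : Fin n → ℝ)
    (y : Fin n → ℝ) (hy : y ∈ perp B (D.T x)) (hy0 : y ≠ 0)
    (zz : Fin n → ℝ) (hz1 : N zz ≤ 1) (hz2 : ip B y zz = dualNorm B N y) :
    zz ∈ perp B (D.T x) := by
  have hExt' : ∀ a ∈ extPts N, ip B a a = 1 := fun a ha => Real.sqrt_eq_one.1 (hExt a ha)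
  have hd := dualNorm_pos hB hN hy0
  refine mem_of_extPts hN B (fun w hw => ip_le_dualNorm hN y hw) convex_perp isClosed_perp
    (fun a ha hya => ?_) hz1 hz2
  refine extreme_mem_perp hB hN hExt' D (perp_smul (dualNorm B N y)⁻¹ hy) (fun w => ?_) ha ?_
  · rw [ip_smul_left, inv_mul_le_iff₀ hd]
    exact ip_le_dualNorm_mul hN y w
  · rw [ip_smul_left, hya, inv_mul_cancel₀ hd.ne']

end PGH
end

section
/- Let ‖·‖ be a decomposable norm on ℝ^n, i.e., for each x ∈ ℝ^n there exist a subspace T_x and a vector e_x ∈ T_x with ∂‖x‖ = {e_x + v : v ∈ T_x^⊥, ‖v‖* ≤ 1}. Then x ∈ T_x for every x ∈ ℝ^n. -/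
/-!
Every subgradient `ξ ∈ ∂N(x)` satisfies `⟪ξ, x⟫ = N x` (compare `N` at `x` with `0` and `2x`).
By decomposability both `e x` and `e x + v` are subgradients at `x` for each `v ∈ (T x)ᗮ` of dual
norm at most one, so `⟪v, x⟫ = 0`; by scaling this holds for every `v ∈ (T x)ᗮ`. Hence
`x ∈ (T x)ᗮᗮ = T x`, where the last equality uses that the form given by `B` is symmetric and
nondegenerate in finite dimension.
-/

open Matrix

namespace PGH

variable {n m : ℕ}

/-- Homogeneity of the dual norm for nonnegative scalars. No boundedness is needed: scaling by
`c ≥ 0` commutes with the real `sSup`, junk values included. -/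
lemma dualNorm_smul (B : Matrix (Fin n) (Fin n) ℝ) (N : (Fin n → ℝ) → ℝ) {c : ℝ} (hc : 0 ≤ c)
    (v : Fin n → ℝ) : dualNorm B N (c • v) = c * dualNorm B N v := by
  unfold dualNorm
  rw [← smul_eq_mul, ← Real.sSup_smul_of_nonneg hc, ← Set.image_smul, Set.image_image]
  simp [ip]

/-- Euler's identity for subgradients of a norm. -/
lemma ip_eq_of_mem_subdiff {B : Matrix (Fin n) (Fin n) ℝ} {N : (Fin n → ℝ) → ℝ} (hN : IsNorm N)
    {x z : Fin n → ℝ} (hz : z ∈ subdiff B N x) : ip B z x = N x := by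
  have h0 := hz 0
  have h2 := hz ((2 : ℝ) • x)
  have hN0 : N 0 = 0 := (hN.eq_zero_iff 0).2 rfl
  have hx : (2 : ℝ) • x - x = x := by rw [two_smul, add_sub_cancel_right]
  have hneg : ip B z (0 - x) = -ip B z x := by simp [ip, Matrix.mulVec_neg]
  rw [hneg, hN0] at h0
  rw [hx, hN.smul_eq, abs_of_pos two_pos] at h2
  linarith

/-- The biorthogonal of `T` with respect to `⟪·,·⟫` is contained in `T`. -/
lemma mem_of_forall_perp {B : Matrix (Fin n) (Fin n) ℝ} (hB : B.PosDef)
    (T : Submodule ℝ (Fin n → ℝ)) {x : Fin n → ℝ} (hx : ∀ v ∈ perp B T, ip B v x = 0) :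
    x ∈ T := by
  have hip : ∀ u v, Matrix.toBilin' B u v = ip B u v := fun u v => Matrix.toBilin'_apply' B u v
  have hnd : (Matrix.toBilin' B).Nondegenerate :=
    LinearMap.BilinForm.nondegenerate_toBilin'_of_det_ne_zero' B hB.det_pos.ne'
  have hBt : Bᵀ = B := by simpa using hB.isHermitian.eq
  have hrefl : (Matrix.toBilin' B).IsRefl := by
    intro u v h
    rw [hip] at h ⊢
    rw [← h, ip, ip, Matrix.dotProduct_mulVec, dotProduct_comm, ← Matrix.mulVec_transpose, hBt]
  rw [← LinearMap.BilinForm.orthogonal_orthogonal hnd hrefl T]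
  intro v hv
  exact (hip v x).trans (hx v fun u hu => (hip u v).symm.trans (hv u hu))

/-- For a decomposable norm, `x ∈ T_x` for every `x`. -/
theorem mem_T_self {n : ℕ}
    (B : Matrix (Fin n) (Fin n) ℝ) (hB : B.PosDef)
    (N : (Fin n → ℝ) → ℝ) (hN : IsNorm N)
    (D : DecompStruct B N) :
    ∀ x : Fin n → ℝ, x ∈ D.T x := by
  intro x
  refine mem_of_forall_perp hB _ fun v hv => ?_
  have key : ∀ c : ℝ, 0 ≤ c → c * dualNorm B N v ≤ 1 →
      ip B (D.e x) x + c * ip B v x = N x := by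
    intro c hc h
    have hmem : D.e x + c • v ∈ subdiff B N x := by
      rw [D.subdiff_eq]
      refine ⟨c • v, fun u hu => ?_, by rwa [dualNorm_smul B N hc], rfl⟩
      have huv : ip B u v = 0 := hv u hu
      rw [ip] at huv ⊢
      rw [Matrix.mulVec_smul, dotProduct_smul, huv, smul_zero]
    have := ip_eq_of_mem_subdiff hN hmem
    simpa [ip, add_dotProduct] using this
  have h0 := key 0 le_rfl (by simp)
  have hpos : 0 < 1 + |dualNorm B N v| := by positivity
  -- This positive scalar shrinks `v` into the dual unit ball; the `1 +` avoids dividing by zero.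
  have h1 := key (1 + |dualNorm B N v|)⁻¹ (by positivity) (by
    rw [inv_mul_le_iff₀ hpos]
    linarith [le_abs_self (dualNorm B N v)])
  have h : (1 + |dualNorm B N v|)⁻¹ * ip B v x = 0 := by linarith
  exact (mul_eq_zero.1 h).resolve_left (inv_ne_zero hpos.ne')

end PGH
end
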